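/- arXiv:2207.02129 — 4 statements merged into one kernel-verified Lean document; each statement's English description precedes it below -/
import Mathlib

section
/- Regularity for the declarative core type system: if Γ ⊢ a : A and ⊢ Γ, then Γ ⊢ A : Type. -/
/-!
Regularity is proved by induction on the typing derivation. The context hypothesis supplies the
variable case (weakening moves the type of a declared variable into the whole context), and in the
λ-case the domain premise lets the context grow. In the application case the function has type
`(x:A) → B`, so the induction hypothesis and inversion give `Γ, x:A ⊢ B : Type`; substituting the
argument for `x` yields `Γ ⊢ B[b/x] : Type`.

Weakening and substitution are obtained from their simultaneous versions: typing is preserved by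
every renaming and every parallel substitution compatible with the contexts (`HasType.ren`,
`HasType.sub`). Both proofs need the operations to commute with single-variable substitution,
because it occurs in the type of an application; this is the usual algebra of parallel
substitutions (`sub_sub` and its special cases). The given `Tm.lift` and `Tm.subst` are instances
of these operations (`lift_eq`, `subst_eq`).
-/

/-- Terms of the core pi-forall language, with de Bruijn indices for variables.
    `lam a` binds one variable in `a`, and `pi A B` binds one variable in `B`.
    (De Bruijn representation identifies terms up to α-equivalence.) -/
inductive Tm : Type
  | var : Nat → Tm
  | lam : Tm → Tm
  | app : Tm → Tm → Tm
  | pi  : Tm → Tm → Tm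
  | type : Tm
  | annot : Tm → Tm → Tm
  deriving DecidableEq

namespace Tm

/-- `lift d c t` shifts by `d` every variable of `t` whose index is at least `c`. -/
def lift (d c : Nat) : Tm → Tm
  | var k => if k < c then var k else var (k + d)
  | lam a => lam (lift d (c + 1) a)
  | app a b => app (lift d c a) (lift d c b)
  | pi A B => pi (lift d c A) (lift d (c + 1) B)
  | type => type
  | annot a A => annot (lift d c a) (lift d c A)

/-- `subst a x b` is the capture-avoiding substitution `b[a/x]` of `a`
    for variable `x` in `b` (indices above `x` are decremented). -/
def subst (a : Tm) (x : Nat) : Tm → Tm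
  | var k => if k = x then lift x 0 a else if x < k then var (k - 1) else var k
  | lam b => lam (subst a (x + 1) b)
  | app b c => app (subst a x b) (subst a x c)
  | pi A B => pi (subst a x A) (subst a (x + 1) B)
  | type => type
  | annot b A => annot (subst a x b) (subst a x A)

end Tm

/-- A typing context is a list of types; the head is the type of variable 0. -/
abbrev Ctx := List Tm

/-- `lookupTy Γ x = some A` means `x : A ∈ Γ` (with the type suitably shifted
    so that it is well-scoped in the whole context `Γ`). -/
def lookupTy : Ctx → Nat → Option Tm
  | [], _ => none
  | A :: _, 0 => some (Tm.lift 1 0 A)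
  | _ :: Γ, k + 1 => (lookupTy Γ k).map (Tm.lift 1 0)

/-- The declarative typing judgment `Γ ⊢ a : A`. -/
inductive HasType : Ctx → Tm → Tm → Prop
  | var {Γ x A} : lookupTy Γ x = some A → HasType Γ (.var x) A
  | type {Γ} : HasType Γ .type .type
  | pi {Γ A B} : HasType Γ A .type → HasType (A :: Γ) B .type →
      HasType Γ (.pi A B) .type
  | lam {Γ A a B} : HasType (A :: Γ) a B → HasType Γ A .type →
      HasType Γ (.lam a) (.pi A B)
  | app {Γ a b A B} : HasType Γ a (.pi A B) → HasType Γ b A →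
      HasType Γ (.app a b) (Tm.subst b 0 B)
  | annot {Γ a A} : HasType Γ a A → HasType Γ A .type →
      HasType Γ (.annot a A) A

/-- The judgment `⊢ Γ`: the context type checks. -/
inductive CtxWf : Ctx → Prop
  | nil : CtxWf []
  | cons {Γ A} : CtxWf Γ → HasType Γ A .type → CtxWf (A :: Γ)

namespace Tm

/-- Extension of a renaming under a binder. -/
def upr (ρ : Nat → Nat) : Nat → Nat
  | 0 => 0
  | n + 1 => ρ n + 1

/-- Simultaneous renaming of the free variables of a term. -/
def ren (ρ : Nat → Nat) : Tm → Tm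
  | var k => var (ρ k)
  | lam a => lam (ren (upr ρ) a)
  | app a b => app (ren ρ a) (ren ρ b)
  | pi A B => pi (ren ρ A) (ren (upr ρ) B)
  | type => type
  | annot a A => annot (ren ρ a) (ren ρ A)

/-- Extension of a parallel substitution under a binder. -/
def ups (σ : Nat → Tm) : Nat → Tm
  | 0 => var 0
  | n + 1 => ren Nat.succ (σ n)

/-- Parallel capture-avoiding substitution. -/
def sub (σ : Nat → Tm) : Tm → Tm
  | var k => σ k
  | lam a => lam (sub (ups σ) a)
  | app a b => app (sub σ a) (sub σ b)
  | pi A B => pi (sub σ A) (sub (ups σ) B)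
  | type => type
  | annot a A => annot (sub σ a) (sub σ A)

/-- The parallel substitution that replaces variable `0` by `b` and lowers the others. -/
def inst (b : Tm) : Nat → Tm
  | 0 => b
  | n + 1 => var n

theorem ren_ren (t : Tm) : ∀ ρ ρ' : Nat → Nat, ren ρ' (ren ρ t) = ren (fun n => ρ' (ρ n)) t := by
  have key : ∀ ρ ρ' : Nat → Nat, (fun n => upr ρ' (upr ρ n)) = upr (fun n => ρ' (ρ n)) := by
    intro ρ ρ'; funext n; cases n <;> rfl
  induction t <;> intro ρ ρ' <;> simp_all [ren]

theorem sub_ren (t : Tm) : ∀ (ρ : Nat → Nat) (σ : Nat → Tm),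
    sub σ (ren ρ t) = sub (fun n => σ (ρ n)) t := by
  have key : ∀ (ρ : Nat → Nat) (σ : Nat → Tm),
      (fun n => ups σ (upr ρ n)) = ups (fun n => σ (ρ n)) := by
    intro ρ σ; funext n; cases n <;> rfl
  induction t <;> intro ρ σ <;> simp_all [ren, sub]

theorem ren_sub (t : Tm) : ∀ (σ : Nat → Tm) (ρ : Nat → Nat),
    ren ρ (sub σ t) = sub (fun n => ren ρ (σ n)) t := by
  have key : ∀ (σ : Nat → Tm) (ρ : Nat → Nat),
      (fun n => ren (upr ρ) (ups σ n)) = ups (fun n => ren ρ (σ n)) := by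
    intro σ ρ; funext n
    cases n with
    | zero => rfl
    | succ n => simp only [ups, ren_ren]; rfl
  induction t <;> intro σ ρ <;> simp_all [ren, sub]

theorem sub_sub (t : Tm) : ∀ σ τ : Nat → Tm, sub τ (sub σ t) = sub (fun n => sub τ (σ n)) t := by
  have key : ∀ σ τ : Nat → Tm, (fun n => sub (ups τ) (ups σ n)) = ups (fun n => sub τ (σ n)) := by
    intro σ τ; funext n
    cases n with
    | zero => rfl
    | succ n => simp only [ups, sub_ren, ren_sub]
  induction t <;> intro σ τ <;> simp_all [sub]

theorem sub_var (t : Tm) : sub var t = t := by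
  have key : ups var = var := by funext n; cases n <;> rfl
  induction t <;> simp_all [sub]

/-- Shifting is the renaming that adds `d` to the indices that are at least `c`. -/
theorem lift_eq (d : Nat) (t : Tm) : ∀ c,
    lift d c t = ren (fun k => if k < c then k else k + d) t := by
  have key : ∀ c, upr (fun k => if k < c then k else k + d) =
      fun k => if k < c + 1 then k else k + d := by
    intro c; funext n
    cases n with
    | zero => simp [upr]
    | succ n => simp only [upr]; split_ifs <;> omega
  induction t <;> intro c <;> simp_all [lift, ren]
  split_ifs <;> rfl

theorem lift_one (t : Tm) : lift 1 0 t = ren Nat.succ t := by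
  rw [lift_eq]; rfl

/-- Substitution for variable `x` as a parallel substitution. -/
theorem subst_eq_aux (a t : Tm) : ∀ x, subst a x t =
    sub (fun k => if k = x then lift x 0 a else if x < k then var (k - 1) else var k) t := by
  have key : ∀ x, ups (fun k => if k = x then lift x 0 a else
        if x < k then var (k - 1) else var k) =
      fun k => if k = x + 1 then lift (x + 1) 0 a else
        if x + 1 < k then var (k - 1) else var k := by
    intro x; funext n
    cases n with
    | zero => simp [ups]
    | succ n =>
      simp only [ups, Nat.add_right_cancel_iff, Nat.add_lt_add_iff_right]
      split_ifs with h1 h2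
      · simp [lift_eq, ren_ren, Nat.succ_eq_add_one, Nat.add_assoc]
      · simp only [ren, var.injEq]; omega
      · rfl
  induction t <;> intro x <;> simp_all [subst, sub]

theorem subst_eq (b t : Tm) : subst b 0 t = sub (inst b) t := by
  rw [subst_eq_aux]
  congr 1; funext n
  cases n with
  | zero =>
    have : (fun k : Nat => k) = id := rfl
    -- Shifting by zero is the identity.
    have h : sub (fun k => var (id k)) b = b := sub_var b
    rw [← sub_ren b id var, sub_var] at h
    simpa [inst, lift_eq, this] using h
  | succ n => simp [inst]

theorem ren_subst (ρ : Nat → Nat) (b t : Tm) :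
    ren ρ (subst b 0 t) = subst (ren ρ b) 0 (ren (upr ρ) t) := by
  rw [subst_eq, subst_eq, ren_sub, sub_ren]
  congr 1; funext n; cases n <;> rfl

theorem sub_subst (σ : Nat → Tm) (b t : Tm) :
    sub σ (subst b 0 t) = subst (sub σ b) 0 (sub (ups σ) t) := by
  rw [subst_eq, subst_eq, sub_sub, sub_sub]
  congr 1; funext n
  cases n with
  | zero => rfl
  | succ n =>
    simp only [ups, sub_ren, sub, inst]
    exact (sub_var _).symm

theorem ren_succ_ren (ρ : Nat → Nat) (t : Tm) :
    ren (upr ρ) (ren Nat.succ t) = ren Nat.succ (ren ρ t) := by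
  rw [ren_ren, ren_ren]; rfl

theorem sub_ren_succ (σ : Nat → Tm) (t : Tm) :
    sub (ups σ) (ren Nat.succ t) = ren Nat.succ (sub σ t) := by
  rw [sub_ren, ren_sub]; rfl

end Tm

open Tm

/-- Typing is preserved by every renaming that respects the declarations of the contexts. -/
theorem HasType.ren {Γ : Ctx} {a A : Tm} (h : HasType Γ a A) : ∀ {Δ : Ctx} {ρ : Nat → Nat},
    (∀ x B, lookupTy Γ x = some B → lookupTy Δ (ρ x) = some (Tm.ren ρ B)) →
    HasType Δ (Tm.ren ρ a) (Tm.ren ρ A) := by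
  have up : ∀ {Γ Δ : Ctx} {ρ : Nat → Nat} (C : Tm),
      (∀ x B, lookupTy Γ x = some B → lookupTy Δ (ρ x) = some (Tm.ren ρ B)) →
      ∀ x B, lookupTy (C :: Γ) x = some B →
        lookupTy (Tm.ren ρ C :: Δ) (upr ρ x) = some (Tm.ren (upr ρ) B) := by
    intro Γ Δ ρ C hρ x B hx
    cases x with
    | zero =>
      simp only [lookupTy, Option.some.injEq] at hx
      subst hx
      simp [lookupTy, upr, lift_one, ren_succ_ren]
    | succ x =>
      simp only [lookupTy, Option.map_eq_some_iff] at hx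
      obtain ⟨B', hB, rfl⟩ := hx
      simp [lookupTy, upr, hρ x B' hB, lift_one, ren_succ_ren]
  induction h with
  | var hx => intro Δ ρ hρ; exact .var (hρ _ _ hx)
  | type => intro Δ ρ hρ; exact .type
  | pi _ _ ihA ihB => intro Δ ρ hρ; exact .pi (ihA hρ) (ihB (up _ hρ))
  | lam _ _ iha ihA => intro Δ ρ hρ; exact .lam (iha (up _ hρ)) (ihA hρ)
  | app _ _ iha ihb => intro Δ ρ hρ; rw [ren_subst]; exact .app (iha hρ) (ihb hρ)
  | annot _ _ iha ihA => intro Δ ρ hρ; exact .annot (iha hρ) (ihA hρ)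

theorem HasType.weaken {Γ : Ctx} {a A : Tm} (C : Tm) (h : HasType Γ a A) :
    HasType (C :: Γ) (Tm.ren Nat.succ a) (Tm.ren Nat.succ A) := by
  refine h.ren fun x B hx => ?_
  simp [lookupTy, hx, lift_one]

/-- Typing is preserved by every parallel substitution whose components have the (substituted)
declared types. -/
theorem HasType.sub {Γ : Ctx} {a A : Tm} (h : HasType Γ a A) : ∀ {Δ : Ctx} {σ : Nat → Tm},
    (∀ x B, lookupTy Γ x = some B → HasType Δ (σ x) (Tm.sub σ B)) →
    HasType Δ (Tm.sub σ a) (Tm.sub σ A) := by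
  have up : ∀ {Γ Δ : Ctx} {σ : Nat → Tm} (C : Tm),
      (∀ x B, lookupTy Γ x = some B → HasType Δ (σ x) (Tm.sub σ B)) →
      ∀ x B, lookupTy (C :: Γ) x = some B →
        HasType (Tm.sub σ C :: Δ) (ups σ x) (Tm.sub (ups σ) B) := by
    intro Γ Δ σ C hσ x B hx
    cases x with
    | zero =>
      simp only [lookupTy, Option.some.injEq] at hx
      subst hx
      rw [lift_one, sub_ren_succ]
      exact .var (by simp [lookupTy, lift_one])
    | succ x =>
      simp only [lookupTy, Option.map_eq_some_iff] at hx
      obtain ⟨B', hB, rfl⟩ := hx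
      rw [lift_one, sub_ren_succ]
      exact (hσ x B' hB).weaken _
  induction h with
  | var hx => intro Δ σ hσ; exact hσ _ _ hx
  | type => intro Δ σ hσ; exact .type
  | pi _ _ ihA ihB => intro Δ σ hσ; exact .pi (ihA hσ) (ihB (up _ hσ))
  | lam _ _ iha ihA => intro Δ σ hσ; exact .lam (iha (up _ hσ)) (ihA hσ)
  | app _ _ iha ihb => intro Δ σ hσ; rw [sub_subst]; exact .app (iha hσ) (ihb hσ)
  | annot _ _ iha ihA => intro Δ σ hσ; exact .annot (iha hσ) (ihA hσ)

theorem HasType.subst {Γ : Ctx} {a b A B : Tm} (h : HasType (A :: Γ) a B) (hb : HasType Γ b A) :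
    HasType Γ (Tm.subst b 0 a) (Tm.subst b 0 B) := by
  rw [subst_eq, subst_eq]
  refine h.sub fun x C hx => ?_
  -- A type coming from `Γ` does not mention the substituted variable.
  have cancel : ∀ T : Tm, Tm.sub (inst b) (Tm.lift 1 0 T) = T := by
    intro T; rw [lift_one, sub_ren]; exact sub_var T
  cases x with
  | zero =>
    simp only [lookupTy, Option.some.injEq] at hx
    subst hx
    rw [cancel]; exact hb
  | succ x =>
    simp only [lookupTy, Option.map_eq_some_iff] at hx
    obtain ⟨C', hC, rfl⟩ := hx
    rw [cancel]; exact .var hC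

theorem CtxWf.lookup {Γ : Ctx} (hΓ : CtxWf Γ) : ∀ {x : Nat} {A : Tm},
    lookupTy Γ x = some A → HasType Γ A .type := by
  induction hΓ with
  | nil => intro x A hx; simp [lookupTy] at hx
  | cons _ hA ih =>
    intro x B hx
    cases x with
    | zero =>
      simp only [lookupTy, Option.some.injEq] at hx
      subst hx
      rw [lift_one]; exact hA.weaken _
    | succ x =>
      simp only [lookupTy, Option.map_eq_some_iff] at hx
      obtain ⟨C, hC, rfl⟩ := hx
      rw [lift_one]; exact (ih hC).weaken _

/-- Regularity for the declarative core type system: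
    if `Γ ⊢ a : A` and `⊢ Γ`, then `Γ ⊢ A : Type`. -/
theorem regularity {Γ : Ctx} {a A : Tm}
    (h : HasType Γ a A) (hΓ : CtxWf Γ) : HasType Γ A .type := by
  induction h with
  | var hx => exact hΓ.lookup hx
  | type => exact .type
  | pi _ _ _ _ => exact .type
  | lam _ hA iha _ => exact .pi hA (iha (.cons hΓ hA))
  | app _ hb iha _ =>
    cases iha hΓ with
    | pi _ hB => exact hB.subst hb
  | annot _ hA _ _ => exact hA
end

section
/- Substitution lemma for the declarative core type system: if Γ₁, x:A, Γ₂ ⊢ b : B and Γ₁ ⊢ a : A, then Γ₁, Γ₂[a/x] ⊢ b[a/x] : B[a/x], where Γ₂[a/x] substitutes a for x in every type in Γ₂. -/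
/-- `substCtx a Γ₂` substitutes `a` for the variable bound just below `Γ₂`
    in every type of `Γ₂` (i.e. `Γ₂[a/x]`). -/
def substCtx (a : Tm) : Ctx → Ctx
  | [] => []
  | B :: Γ => Tm.subst a Γ.length B :: substCtx a Γ

namespace Tm

theorem lift_zero (c : Nat) (t : Tm) : lift 0 c t = t := by
  induction t generalizing c <;> simp_all [lift]

/-- Two shifts merge when the second cutoff lies in the gap opened by the first. -/
theorem lift_lift_merge (d e : Nat) (t : Tm) (c c' : Nat) (h₁ : c' ≤ c) (h₂ : c ≤ c' + e) :
    lift d c (lift e c' t) = lift (e + d) c' t := by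
  induction t generalizing c c' with
  | var k => simp only [lift]; split_ifs <;> simp only [lift] <;> split_ifs <;> grind
  | type => rfl
  | lam a ih => simp only [lift]; rw [ih _ _ (by omega) (by omega)]
  | app a b iha ihb => simp only [lift]; rw [iha _ _ h₁ h₂, ihb _ _ h₁ h₂]
  | annot a b iha ihb => simp only [lift]; rw [iha _ _ h₁ h₂, ihb _ _ h₁ h₂]
  | pi a b iha ihb => simp only [lift]; rw [iha _ _ h₁ h₂, ihb _ _ (by omega) (by omega)]

theorem lift_lift_comm (d e : Nat) (t : Tm) (c c' : Nat) (h : c' ≤ c) :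
    lift d (c + e) (lift e c' t) = lift e c' (lift d c t) := by
  induction t generalizing c c' with
  | var k => simp only [lift]; split_ifs <;> simp only [lift] <;> split_ifs <;> grind
  | type => rfl
  | lam a ih => simp only [lift]; rw [← ih _ _ (by omega), Nat.add_right_comm]
  | app a b iha ihb => simp only [lift]; rw [iha _ _ h, ihb _ _ h]
  | annot a b iha ihb => simp only [lift]; rw [iha _ _ h, ihb _ _ h]
  | pi a b iha ihb =>
    simp only [lift]; rw [iha _ _ h, ← ihb _ _ (Nat.succ_le_succ h), Nat.add_right_comm]

/-- A variable inside the gap opened by a shift does not occur, so substituting for it only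
closes the gap by one. -/
theorem subst_lift_cancel (b : Tm) (d : Nat) (t : Tm) (c n : Nat) (h₁ : c ≤ n) (h₂ : n ≤ c + d) :
    subst b n (lift (d + 1) c t) = lift d c t := by
  induction t generalizing c n with
  | var k => simp only [lift]; split_ifs <;> simp only [subst] <;> split_ifs <;> grind
  | type => rfl
  | lam a ih => simp only [lift, subst]; rw [ih _ _ (by omega) (by omega)]
  | app a b iha ihb => simp only [lift, subst]; rw [iha _ _ h₁ h₂, ihb _ _ h₁ h₂]
  | annot a b iha ihb => simp only [lift, subst]; rw [iha _ _ h₁ h₂, ihb _ _ h₁ h₂]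
  | pi a b iha ihb => simp only [lift, subst]; rw [iha _ _ h₁ h₂, ihb _ _ (by omega) (by omega)]

/-- Substitution for a variable above the cutoff of a shift commutes with the shift. The
substituted term is unchanged, because `subst` itself shifts it by the index it replaces. -/
theorem subst_lift_comm (a : Tm) (n : Nat) (t : Tm) (x c : Nat) (h : c ≤ x) :
    subst a (x + n) (lift n c t) = lift n c (subst a x t) := by
  induction t generalizing x c with
  | var k =>
    by_cases hk : k = x
    · subst hk
      have : ¬ k < c := by omega
      simp only [lift, subst, this, if_false, if_true]
      rw [lift_lift_merge _ _ _ _ _ (by omega) (by omega)]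
    · simp only [lift, subst]; split_ifs <;> simp only [lift, subst] <;> split_ifs <;> grind
  | type => rfl
  | lam a ih => simp only [lift, subst]; rw [← ih _ _ (by omega), Nat.add_right_comm]
  | app a b iha ihb => simp only [lift, subst]; rw [iha _ _ h, ihb _ _ h]
  | annot a b iha ihb => simp only [lift, subst]; rw [iha _ _ h, ihb _ _ h]
  | pi a b iha ihb =>
    simp only [lift, subst]; rw [iha _ _ h, ← ihb _ _ (Nat.succ_le_succ h), Nat.add_right_comm]

/-- A shift with cutoff above the substituted variable distributes over the substitution. -/
theorem lift_subst (b : Tm) (d c : Nat) (t : Tm) (n : Nat) :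
    lift d (c + n) (subst b n t) = subst (lift d c b) n (lift d (c + n + 1) t) := by
  induction t generalizing n with
  | var k =>
    by_cases hk : k = n
    · subst hk
      have : k < c + k + 1 := by omega
      simp only [lift, subst, this, if_true]
      rw [lift_lift_comm _ _ _ _ _ (by omega)]
    · simp only [lift, subst]; split_ifs <;> simp only [lift, subst] <;> split_ifs <;> grind
  | type => rfl
  | lam a ih => exact congrArg lam (ih (n + 1))
  | app a b iha ihb => simp only [lift, subst]; rw [iha, ihb]
  | annot a b iha ihb => simp only [lift, subst]; rw [iha, ihb]
  | pi a b iha ihb => exact congrArg₂ pi (iha n) (ihb (n + 1))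

/-- Commutation of substitutions, `B[b/y][a/x] = B[a/x][b[a/x]/y]`, under `n` further binders. -/
theorem subst_subst (a b : Tm) (x : Nat) (t : Tm) (n : Nat) :
    subst a (x + n) (subst b n t) = subst (subst a x b) n (subst a (x + n + 1) t) := by
  induction t generalizing n with
  | var k =>
    by_cases hk : k = n
    · subst hk
      have h₁ : ¬ k = x + k + 1 := by omega
      have h₂ : ¬ x + k + 1 < k := by omega
      simp only [subst, h₁, h₂, if_false, if_true]
      rw [subst_lift_comm _ _ _ _ _ (by omega)]
    · by_cases hk' : k = x + n + 1
      · subst hk'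
        have h : n < x + n + 1 := by omega
        simp only [subst, hk, h, if_false, if_true, Nat.add_sub_cancel]
        rw [subst_lift_cancel _ _ _ _ _ (by omega) (by omega)]
      · simp only [subst]; split_ifs <;> simp only [subst] <;> split_ifs <;> grind
  | type => rfl
  | lam a ih => exact congrArg lam (ih (n + 1))
  | app a b iha ihb => simp only [subst]; rw [iha, ihb]
  | annot a b iha ihb => simp only [subst]; rw [iha, ihb]
  | pi a b iha ihb => exact congrArg₂ pi (iha n) (ihb (n + 1))

end Tm

/-- The context `Γ` after `d` assumptions have been inserted just below it. -/
def liftCtx (d : Nat) : Ctx → Ctx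
  | [] => []
  | B :: Γ => Tm.lift d Γ.length B :: liftCtx d Γ

theorem lookupTy_append (Δ Γ : Ctx) (k : Nat) :
    lookupTy (Δ ++ Γ) (k + Δ.length) = (lookupTy Γ k).map (Tm.lift Δ.length 0) := by
  induction Δ with
  | nil =>
    have : Tm.lift 0 0 = id := funext (Tm.lift_zero 0)
    simp [this]
  | cons C Δ ih =>
    rw [List.length_cons, ← Nat.add_assoc, List.cons_append, lookupTy, ih, Option.map_map]
    congr 1
    funext t
    exact Tm.lift_lift_merge _ _ _ _ _ (by omega) (by omega)

theorem lookupTy_weaken (Γ₂ Δ Γ₁ : Ctx) (k : Nat) (B : Tm)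
    (h : lookupTy (Γ₂ ++ Γ₁) k = some B) :
    lookupTy (liftCtx Δ.length Γ₂ ++ (Δ ++ Γ₁)) (if k < Γ₂.length then k else k + Δ.length) =
      some (Tm.lift Δ.length Γ₂.length B) := by
  induction Γ₂ generalizing k B with
  | nil =>
    rw [List.nil_append] at h
    simp [liftCtx, lookupTy_append, h]
  | cons C Γ₂ ih =>
    cases k with
    | zero =>
      simp only [List.cons_append, lookupTy, Option.some.injEq] at h
      subst h
      simp only [liftCtx, List.length_cons, Nat.zero_lt_succ, if_true, List.cons_append, lookupTy]
      rw [Tm.lift_lift_comm _ _ _ _ _ (by omega)]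
    | succ k =>
      simp only [List.cons_append, lookupTy, Option.map_eq_some_iff] at h
      obtain ⟨B', h, rfl⟩ := h
      have e : (if k + 1 < (C :: Γ₂).length then k + 1 else k + 1 + Δ.length) =
          (if k < Γ₂.length then k else k + Δ.length) + 1 := by
        simp only [List.length_cons]; split_ifs <;> omega
      rw [e, liftCtx, List.cons_append, lookupTy, ih k B' h, Option.map_some, List.length_cons,
        Tm.lift_lift_comm _ _ _ _ _ (by omega)]

/-- Weakening: assumptions `Δ` may be inserted anywhere in the context. -/
theorem HasType.weaken_s5 {Γ : Ctx} {b B : Tm} (hb : HasType Γ b B) (Γ₂ Δ Γ₁ : Ctx)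
    (hΓ : Γ = Γ₂ ++ Γ₁) :
    HasType (liftCtx Δ.length Γ₂ ++ (Δ ++ Γ₁))
      (Tm.lift Δ.length Γ₂.length b) (Tm.lift Δ.length Γ₂.length B) := by
  induction hb generalizing Γ₂ with
  | @var Γ k B h =>
    subst hΓ
    have := HasType.var (lookupTy_weaken Γ₂ Δ Γ₁ k B h)
    rwa [apply_ite Tm.var] at this
  | type => exact .type
  | @pi Γ A B _ _ ihA ihB => exact .pi (ihA Γ₂ hΓ) (ihB (A :: Γ₂) (by rw [hΓ]; rfl))
  | @lam Γ A a B _ _ iha ihA => exact .lam (iha (A :: Γ₂) (by rw [hΓ]; rfl)) (ihA Γ₂ hΓ)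
  | @app Γ a b A B _ _ iha ihb =>
    have e := Tm.lift_subst b Δ.length Γ₂.length B 0
    rw [Nat.add_zero] at e
    rw [e]
    exact .app (iha Γ₂ hΓ) (ihb Γ₂ hΓ)
  | annot _ _ iha ihA => exact .annot (iha Γ₂ hΓ) (ihA Γ₂ hΓ)

/-- The variable case of the substitution lemma. Each assumption of `Γ₂` that is passed on the way
down to the variable is accounted for by weakening by one assumption. -/
theorem HasType.subst_var {Γ₁ : Ctx} {a A : Tm} (ha : HasType Γ₁ a A) (Γ₂ : Ctx) (k : Nat) (B : Tm)
    (h : lookupTy (Γ₂ ++ A :: Γ₁) k = some B) :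
    HasType (substCtx a Γ₂ ++ Γ₁)
      (Tm.subst a Γ₂.length (.var k)) (Tm.subst a Γ₂.length B) := by
  induction Γ₂ generalizing k B with
  | nil =>
    cases k with
    | zero =>
      simp only [List.nil_append, lookupTy, Option.some.injEq] at h
      subst h
      simpa [substCtx, Tm.subst, Tm.lift_zero,
        Tm.subst_lift_cancel a 0 A 0 0 (by omega) (by omega)] using ha
    | succ k =>
      simp only [List.nil_append, lookupTy, Option.map_eq_some_iff] at h
      obtain ⟨B', h, rfl⟩ := h
      simpa [substCtx, Tm.subst, Tm.lift_zero,
        Tm.subst_lift_cancel a 0 B' 0 0 (by omega) (by omega)] using HasType.var h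
  | cons C Γ₂ ih =>
    cases k with
    | zero =>
      simp only [List.cons_append, lookupTy, Option.some.injEq] at h
      subst h
      rw [List.length_cons, Tm.subst_lift_comm _ _ _ _ _ (by omega)]
      have e : Tm.subst a (Γ₂.length + 1) (.var 0) = .var 0 := by simp [Tm.subst]
      rw [e]
      exact .var rfl
    | succ k =>
      simp only [List.cons_append, lookupTy, Option.map_eq_some_iff] at h
      obtain ⟨B', h, rfl⟩ := h
      have e : Tm.var (k + 1) = Tm.lift 1 0 (.var k) := by simp [Tm.lift]
      rw [e, List.length_cons, Tm.subst_lift_comm _ _ _ _ _ (by omega),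
        Tm.subst_lift_comm _ _ _ _ _ (by omega)]
      exact (ih k B' h).weaken_s5 [] [Tm.subst a Γ₂.length C] _ rfl

/-- Substitution lemma for the declarative core type system:
    if `Γ₁, x:A, Γ₂ ⊢ b : B` and `Γ₁ ⊢ a : A`, then
    `Γ₁, Γ₂[a/x] ⊢ b[a/x] : B[a/x]`. -/
theorem substitution {Γ₁ Γ₂ : Ctx} {a b A B : Tm}
    (hb : HasType (Γ₂ ++ A :: Γ₁) b B) (ha : HasType Γ₁ a A) :
    HasType (substCtx a Γ₂ ++ Γ₁)
      (Tm.subst a Γ₂.length b) (Tm.subst a Γ₂.length B) := by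
  generalize hΓ : Γ₂ ++ A :: Γ₁ = Γ at hb
  induction hb generalizing Γ₂ with
  | @var Γ k B h =>
    subst hΓ
    exact ha.subst_var Γ₂ k B h
  | type => exact .type
  | @pi Γ C B _ _ ihC ihB => exact .pi (ihC hΓ) (ihB (Γ₂ := C :: Γ₂) (by rw [← hΓ]; rfl))
  | @lam Γ C b B _ _ ihb ihC => exact .lam (ihb (Γ₂ := C :: Γ₂) (by rw [← hΓ]; rfl)) (ihC hΓ)
  | @app Γ b c C B _ _ ihb ihc =>
    have e := Tm.subst_subst a c Γ₂.length B 0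
    rw [Nat.add_zero] at e
    rw [e]
    exact .app (ihb hΓ) (ihc hΓ)
  | annot _ _ ihb ihB => exact .annot (ihb hΓ) (ihB hΓ)
end

section
/- Determinism of weak head normalization: the weak head normal form relation is a partial function, that is, if whnf a ⇝ v and whnf a ⇝ v', then v = v'. -/
/-- The weak head normal form relation `whnf a ⇝ v`. -/
inductive Whnf : Tm → Tm → Prop
  | type : Whnf .type .type
  | var {x} : Whnf (.var x) (.var x)
  | lam {a} : Whnf (.lam a) (.lam a)
  | pi {A B} : Whnf (.pi A B) (.pi A B)
  | annot {a A v} : Whnf a v → Whnf (.annot a A) v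
  | lamBeta {a b a' v} : Whnf a (.lam a') → Whnf (Tm.subst b 0 a') v →
      Whnf (.app a b) v
  | app {a b v} : Whnf a v → (∀ a', v ≠ .lam a') → Whnf (.app a b) (.app v b)

/-- Determinism of weak head normalization: the weak head normal form
    relation is a partial function. -/
theorem whnf_deterministic {a v v' : Tm}
    (h : Whnf a v) (h' : Whnf a v') : v = v' := by
  induction h generalizing v' with
  | type => cases h'; rfl
  | var => cases h'; rfl
  | lam => cases h'; rfl
  | pi => cases h'; rfl
  | annot _ ih =>
    cases h' with
    | annot h₁ => exact ih h₁
  | lamBeta _ _ ihf ihb =>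
    cases h' with
    | lamBeta h₁ h₂ =>
      cases ihf h₁
      exact ihb h₂
    | app h₁ hn => exact absurd (ihf h₁).symm (hn _)
  | app _ hn ih =>
    cases h' with
    | lamBeta h₁ _ => exact absurd (ih h₁) (hn _)
    | app h₁ _ => rw [ih h₁]
end

section
/- Soundness of the whnf-based algorithmic equality with respect to definitional equality: if Γ ⊢ a ⇔ b (the algorithmic equality that reduces both terms to weak head normal form and compares matching head forms recursively), then Γ ⊢ a = b (definitional equality). -/
/-- Definitional equality `Γ ⊢ a = b`. -/
inductive DefEq : Ctx → Tm → Tm → Prop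
  | beta {Γ a v} : Whnf a v → DefEq Γ a v
  | refl {Γ a} : DefEq Γ a a
  | symm {Γ a b} : DefEq Γ a b → DefEq Γ b a
  | trans {Γ a b c} : DefEq Γ a b → DefEq Γ b c → DefEq Γ a c
  | pi {Γ A₁ A₂ B₁ B₂} : DefEq Γ A₁ A₂ → DefEq (A₁ :: Γ) B₁ B₂ →
      DefEq Γ (.pi A₁ B₁) (.pi A₂ B₂)
  | lam {Γ A a b} : DefEq (A :: Γ) a b → DefEq Γ (.lam a) (.lam b)
  | app {Γ a₁ a₂ b₁ b₂} : DefEq Γ a₁ b₁ → DefEq Γ a₂ b₂ →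
      DefEq Γ (.app a₁ a₂) (.app b₁ b₂)
  | annot {Γ a A} : DefEq Γ (.annot a A) a

/-- Algorithmic equality `Γ ⊢ a ⇔ b`: reduce both sides to weak head normal
    form and compare matching head forms recursively. -/
inductive AlgEq : Ctx → Tm → Tm → Prop
  | type {Γ a b} : Whnf a .type → Whnf b .type → AlgEq Γ a b
  | var {Γ a b x} : Whnf a (.var x) → Whnf b (.var x) → AlgEq Γ a b
  | lam {Γ a b a₁ a₂} : Whnf a (.lam a₁) → Whnf b (.lam a₂) →
      AlgEq Γ a₁ a₂ → AlgEq Γ a b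
  | pi {Γ a b A₁ B₁ A₂ B₂} : Whnf a (.pi A₁ B₁) → Whnf b (.pi A₂ B₂) →
      AlgEq Γ A₁ A₂ → AlgEq Γ B₁ B₂ → AlgEq Γ a b
  | app {Γ a b a₁ a₂ b₁ b₂} : Whnf a (.app a₁ a₂) → Whnf b (.app b₁ b₂) →
      AlgEq Γ a₁ b₁ → AlgEq Γ a₂ b₂ → AlgEq Γ a b

/-- Two terms are definitionally equal as soon as their weak head normal forms are. -/
theorem DefEq.of_whnf {Γ : Ctx} {a b v w : Tm} (ha : Whnf a v) (hb : Whnf b w)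
    (h : DefEq Γ v w) : DefEq Γ a b :=
  (DefEq.beta ha).trans (h.trans (DefEq.beta hb).symm)

/-- Soundness in an arbitrary context `Δ`, unrelated to that of the algorithmic derivation; this
generality lets the induction hypotheses be used under binders. -/
theorem AlgEq.defEq {Γ : Ctx} {a b : Tm} (h : AlgEq Γ a b) : ∀ Δ : Ctx, DefEq Δ a b := by
  induction h with
  | type ha hb => exact fun _ => .of_whnf ha hb .refl
  | var ha hb => exact fun _ => .of_whnf ha hb .refl
  | lam ha hb _ ih =>
    -- `DefEq.lam` accepts any type for the bound variable; `Tm.type` is an arbitrary choice.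
    exact fun Δ => .of_whnf ha hb (.lam (ih (.type :: Δ)))
  | pi ha hb _ _ ihA ihB => exact fun Δ => .of_whnf ha hb (.pi (ihA Δ) (ihB _))
  | app ha hb _ _ ih₁ ih₂ => exact fun Δ => .of_whnf ha hb (.app (ih₁ Δ) (ih₂ Δ))

/-- Soundness of the whnf-based algorithmic equality with respect to
    definitional equality: if `Γ ⊢ a ⇔ b` then `Γ ⊢ a = b`. -/
theorem algEq_sound {Γ : Ctx} {a b : Tm} (h : AlgEq Γ a b) : DefEq Γ a b :=
  h.defEq Γ
end
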